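/- Let r > 0, let n be an integer satisfying condition (⋆), and suppose R_n : X_r → X_r is a map such that √n·R_n(u) − (1/p⁰)Q(R_n(u),R_n(u)) = u in L¹(ℝ³) for every u ∈ X_r; set Q_n(u) = n√n·R_n(u) − n·u. Then for every g₀ ∈ X_r and every t₀ ≥ 0 there exists a unique continuous map f : [t₀,∞) → L¹(ℝ³) with f(t) ∈ X_r for all t ≥ t₀ such that f(t₀+t) = g₀ + ∫₀ᵗ Q_n(f(t₀+s)) ds (Bochner integral in L¹(ℝ³)) for all t ≥ 0. Moreover sup_{t ≥ t₀} ‖f(t)‖ ≤ ‖g₀‖. -/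

import Mathlib

/-!
The field `Q_n(u) = n (√n R_n(u) - u)` is a Lipschitz field on `X_r`, and `√n R_n` maps every `X_ρ`
with `ρ ≤ r` into itself. The theorem is then an ODE statement in `L¹`.

*Collisions.* Fix the scattering direction `ω`. Splitting a momentum into a part `v` orthogonal to
`ω̂` and a part `√(1 + |v|²) sinh θ` along `ω̂` turns `dp̄ / p⁰` into `dv dθ`, and a collision changes
only the two rapidities: `(θ, θ - δ)` goes to `(θ + 2h, θ + 2h + δ)`, where `h` depends on `δ` and
the transverse momenta (`prime_rapidity`). This is an involution (`prime_prime`) and a reflection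
followed by a shear, so the collision map preserves `(dp̄ / p⁰)(dq̄ / q⁰) dω`
(`measurePreserving_collMap`). Hence the gain term is the loss term transported by a measure
preserving map.

*The map `R_n`.* Integrating the equation that defines it gives `√n ‖R_n u‖ = ‖u‖`, because `Q / p⁰`
has integral zero (`resolvent_mass`). Subtracting two copies gives
`√n ‖R_n u - R_n v‖ ≤ ‖u - v‖ + 4 C r ‖R_n u - R_n v‖` (`resolvent_lip`), and condition (⋆) absorbs
the last term.

*The equation.* With `N = √n R_n` the problem reads `y' = n (N y - y)`. The set `X_ρ`, `ρ = ‖g₀‖`, is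
bounded, closed, convex, invariant under `N`, and a Lipschitz retract of `L¹`
(`exists_retraction`). Composing `N` with the retraction and passing to `z = exp (n t) y` gives a
bounded globally Lipschitz field, to which Picard-Lindelöf applies on every bounded interval; a
Hahn-Banach argument shows that `y` does not leave `X_ρ` (`ode_exists_Icc`). Working with `ρ = ‖g₀‖`
gives `‖f t‖ ≤ ‖g₀‖`, and uniqueness is Gronwall's inequality in `X_r` (`ode_unique`).
-/

open MeasureTheory Real

noncomputable section

/-- Momentum space `ℝ³`. -/
abbrev E3 : Type := EuclideanSpace ℝ (Fin 3)

/-- The scalar product associated with the Bianchi type I metric coefficients `α = a(t)`,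
`β = b(t)`: `p̄·q̄ = α²p¹q¹ + β²(p²q² + p³q³)`. -/
def mdot (α β : ℝ) (p q : E3) : ℝ :=
  α ^ 2 * p 0 * q 0 + β ^ 2 * (p 1 * q 1 + p 2 * q 2)

/-- `p⁰ = √(1 + |p̄|²)` where `|p̄|² = p̄·p̄`. -/
def pZ (α β : ℝ) (p : E3) : ℝ := Real.sqrt (1 + mdot α β p p)

/-- `ω` normalized to unit length for the metric norm. -/
def omHat (α β : ℝ) (ω : E3) : E3 := (Real.sqrt (mdot α β ω ω))⁻¹ • ω

/-- The total energy `e = p⁰ + q⁰`. -/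
def collE (α β : ℝ) (p q : E3) : ℝ := pZ α β p + pZ α β q

/-- The function `C(p̄, q̄, ω)` of Glassey's representation of post-collisional momenta. -/
def collC (α β : ℝ) (p q ω : E3) : ℝ :=
  2 * pZ α β p * pZ α β q * collE α β p q *
      mdot α β (omHat α β ω) ((pZ α β q)⁻¹ • q - (pZ α β p)⁻¹ • p) /
    (collE α β p q ^ 2 - mdot α β (omHat α β ω) (p + q) ^ 2)

/-- The post-collisional momentum `p̄′ = p̄ + C(p̄,q̄,ω)ω̂`. -/
def pPr (α β : ℝ) (p q ω : E3) : E3 := p + collC α β p q ω • omHat α β ω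

/-- The post-collisional momentum `q̄′ = q̄ − C(p̄,q̄,ω)ω̂`. -/
def qPr (α β : ℝ) (p q ω : E3) : E3 := q - collC α β p q ω • omHat α β ω

/-- The surface measure on the unit sphere `S² ⊂ ℝ³`. -/
def sphMeas : Measure (Metric.sphere (0 : E3) 1) := (volume : Measure E3).toSphere

/-- The gain term `Q⁺(f,g)`. -/
def Qplus (α β : ℝ) (S₀ : E3 → E3 → E3 → E3 → ℝ) (f g : E3 → ℝ) (p : E3) : ℝ :=
  α * β ^ 2 *
    ∫ q : E3, (pZ α β q)⁻¹ *
      ∫ ω : Metric.sphere (0 : E3) 1,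
        f (pPr α β p q ω) * g (qPr α β p q ω) *
          S₀ p q (pPr α β p q ω) (qPr α β p q ω) ∂sphMeas

/-- The loss term `Q⁻(f,g)`. -/
def Qminus (α β : ℝ) (S₀ : E3 → E3 → E3 → E3 → ℝ) (f g : E3 → ℝ) (p : E3) : ℝ :=
  α * β ^ 2 *
    ∫ q : E3, (pZ α β q)⁻¹ *
      ∫ ω : Metric.sphere (0 : E3) 1,
        f p * g q * S₀ p q (pPr α β p q ω) (qPr α β p q ω) ∂sphMeas

/-- The collision operator `Q = Q⁺ − Q⁻`. -/
def Qcoll (α β : ℝ) (S₀ : E3 → E3 → E3 → E3 → ℝ) (f g : E3 → ℝ) (p : E3) : ℝ :=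
  Qplus α β S₀ f g p - Qminus α β S₀ f g p

/-- The space `L¹(ℝ³)`. -/
abbrev L1 : Type := Lp ℝ 1 (volume : Measure E3)

/-- Membership in `X_r = {f ∈ L¹(ℝ³) : f ≥ 0 a.e., ‖f‖ ≤ r}`. -/
def memX (r : ℝ) (f : L1) : Prop := (0 ≤ᵐ[volume] ⇑f) ∧ ‖f‖ ≤ r

end

/-! ### Collisions in rapidity coordinates -/

lemma mdot_add_left (α β : ℝ) (x y z : E3) :
    mdot α β (x + y) z = mdot α β x z + mdot α β y z := by
  simp only [mdot, PiLp.add_apply]; ring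

lemma mdot_add_right (α β : ℝ) (x y z : E3) :
    mdot α β x (y + z) = mdot α β x y + mdot α β x z := by
  simp only [mdot, PiLp.add_apply]; ring

lemma mdot_smul_left (α β k : ℝ) (x y : E3) :
    mdot α β (k • x) y = k * mdot α β x y := by
  simp only [mdot, PiLp.smul_apply, smul_eq_mul]; ring

lemma mdot_smul_right (α β k : ℝ) (x y : E3) :
    mdot α β x (k • y) = k * mdot α β x y := by
  simp only [mdot, PiLp.smul_apply, smul_eq_mul]; ring

lemma mdot_sub_right (α β : ℝ) (x y z : E3) :
    mdot α β x (y - z) = mdot α β x y - mdot α β x z := by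
  simp only [mdot, PiLp.sub_apply]; ring

lemma mdot_comm (α β : ℝ) (x y : E3) : mdot α β x y = mdot α β y x := by
  simp only [mdot]; ring

lemma mdot_self_nonneg (α β : ℝ) (x : E3) : 0 ≤ mdot α β x x := by
  simp only [mdot]
  nlinarith [mul_nonneg (sq_nonneg α) (sq_nonneg (x 0)),
    mul_nonneg (sq_nonneg β) (sq_nonneg (x 1)), mul_nonneg (sq_nonneg β) (sq_nonneg (x 2))]

lemma mdot_self_pos {α β : ℝ} (hα : 0 < α) (hβ : 0 < β) {x : E3} (hx : x ≠ 0) :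
    0 < mdot α β x x := by
  refine lt_of_le_of_ne (mdot_self_nonneg α β x) fun h => hx ?_
  have h0 := mul_nonneg (sq_nonneg α) (sq_nonneg (x 0))
  have h1 := mul_nonneg (sq_nonneg β) (sq_nonneg (x 1))
  have h2 := mul_nonneg (sq_nonneg β) (sq_nonneg (x 2))
  simp only [mdot] at h
  have e0 : α ^ 2 * x 0 ^ 2 = 0 := by nlinarith
  have e1 : β ^ 2 * x 1 ^ 2 = 0 := by nlinarith
  have e2 : β ^ 2 * x 2 ^ 2 = 0 := by nlinarith
  ext i
  fin_cases i
  · simpa [hα.ne'] using e0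
  · simpa [hβ.ne'] using e1
  · simpa [hβ.ne'] using e2

lemma mdot_omHat_self {α β : ℝ} (hα : 0 < α) (hβ : 0 < β) {ω : E3} (hω : ω ≠ 0) :
    mdot α β (omHat α β ω) (omHat α β ω) = 1 := by
  have h := mdot_self_pos hα hβ hω
  rw [omHat, mdot_smul_left, mdot_smul_right, ← mul_assoc, ← mul_inv, Real.mul_self_sqrt h.le,
    inv_mul_cancel₀ h.ne']

lemma pZ_pos (α β : ℝ) (p : E3) : 0 < pZ α β p :=
  Real.sqrt_pos.2 (by linarith [mdot_self_nonneg α β p])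

lemma one_le_pZ (α β : ℝ) (p : E3) : 1 ≤ pZ α β p :=
  Real.one_le_sqrt.2 (by linarith [mdot_self_nonneg α β p])

/-- Mass shell relation in rapidity coordinates: a particle whose transverse momentum `v` is
orthogonal to the unit direction `u` behaves like a one-dimensional particle of mass `pZ v`. -/
lemma pZ_rapidity {α β : ℝ} {u v : E3} (hu : mdot α β u u = 1) (hv : mdot α β u v = 0) (θ : ℝ) :
    pZ α β (v + (pZ α β v * sinh θ) • u) = pZ α β v * cosh θ := by
  have h1 : pZ α β v ^ 2 = 1 + mdot α β v v :=
    Real.sq_sqrt (by linarith [mdot_self_nonneg α β v])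
  have h2 : 1 + mdot α β (v + (pZ α β v * sinh θ) • u) (v + (pZ α β v * sinh θ) • u)
      = (pZ α β v * cosh θ) ^ 2 := by
    simp only [mdot_add_left, mdot_add_right, mdot_smul_left, mdot_smul_right, hu, hv,
      mdot_comm α β v u]
    rw [mul_pow _ (cosh θ), cosh_sq, h1]
    linear_combination (sinh θ ^ 2) * h1
  rw [pZ, h2, Real.sqrt_sq (mul_pos (pZ_pos α β v) (cosh_pos θ)).le]

/-- The rapidity of the centre of mass of two one-dimensional particles of masses `a`, `b` and
rapidities `0`, `-δ`. -/
noncomputable def cmRap (a b δ : ℝ) : ℝ :=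
  arsinh (-(b * sinh δ) / √(a ^ 2 + b ^ 2 + 2 * a * b * cosh δ))

lemma cmRap_neg (a b δ : ℝ) : cmRap a b (-δ) = -cmRap a b δ := by
  rw [cmRap, cmRap, ← arsinh_neg]
  congr 1
  simp [neg_div]

lemma invMass_pos {a b : ℝ} (ha : 0 < a) (hb : 0 < b) (δ : ℝ) :
    0 < a ^ 2 + b ^ 2 + 2 * a * b * cosh δ := by
  have := cosh_pos δ
  positivity

lemma sinh_cmRap (a b δ : ℝ) :
    sinh (cmRap a b δ) = -(b * sinh δ) / √(a ^ 2 + b ^ 2 + 2 * a * b * cosh δ) :=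
  sinh_arsinh _

lemma cosh_cmRap {a b : ℝ} (ha : 0 < a) (hb : 0 < b) (δ : ℝ) :
    cosh (cmRap a b δ) = (a + b * cosh δ) / √(a ^ 2 + b ^ 2 + 2 * a * b * cosh δ) := by
  have hM := invMass_pos ha hb δ
  have hc := cosh_pos δ
  have hs := Real.sq_sqrt hM.le
  have hsp := Real.sqrt_pos.2 hM
  rw [cmRap, cosh_arsinh, Real.sqrt_eq_iff_mul_self_eq_of_pos (by positivity)]
  rw [div_mul_div_comm, div_pow, ← sq, ← sq, hs]
  field_simp
  linear_combination b ^ 2 * cosh_sq δ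

/-- The momentum transfer in rapidity coordinates: the collision shifts the rapidity of the first
particle by `2 * cmRap a b δ` and reverses the rapidity difference `δ`. -/
lemma collC_rapidity {α β : ℝ} {ω v w : E3} (hu : mdot α β (omHat α β ω) (omHat α β ω) = 1)
    (hv : mdot α β (omHat α β ω) v = 0) (hw : mdot α β (omHat α β ω) w = 0) (θ δ : ℝ) :
    let a := pZ α β v
    let b := pZ α β w
    let h := cmRap a b δ
    let c := collC α β (v + (a * sinh θ) • omHat α β ω)
      (w + (b * sinh (θ - δ)) • omHat α β ω) ω
    c = a * sinh (θ + 2 * h) - a * sinh θ ∧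
      c = b * sinh (θ - δ) - b * sinh (θ + 2 * h + δ) := by
  intro a b h c
  have ha : 0 < a := pZ_pos α β v
  have hb : 0 < b := pZ_pos α β w
  have hM := invMass_pos ha hb δ
  have hs := Real.sq_sqrt hM.le
  have hsp := Real.sqrt_pos.2 hM
  have hsh : sinh h = _ := sinh_cmRap a b δ
  have hch : cosh h = _ := cosh_cmRap ha hb δ
  set M := √(a ^ 2 + b ^ 2 + 2 * a * b * cosh δ) with hMdef
  have e1 := cosh_sq θ
  have e2 := cosh_sq δ
  have hden : (a * cosh θ + b * cosh (θ - δ)) ^ 2 - (a * sinh θ + b * sinh (θ - δ)) ^ 2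
      = M ^ 2 := by
    have e3 := cosh_sq (θ - δ)
    have e4 : cosh δ = cosh θ * cosh (θ - δ) - sinh θ * sinh (θ - δ) := by
      rw [← cosh_sub]; congr 1; ring
    rw [hs, e4]
    linear_combination a ^ 2 * e1 + b ^ 2 * e3
  have hc : c = -2 * a * b * sinh δ * (a * cosh θ + b * cosh (θ - δ)) / M ^ 2 := by
    have e4 : sinh δ = sinh θ * cosh (θ - δ) - cosh θ * sinh (θ - δ) := by
      rw [← sinh_sub]; congr 1; ring
    have k1 := (cosh_pos θ).ne'
    have k2 := (cosh_pos (θ - δ)).ne'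
    simp only [c, collC, collE, a, b]
    rw [pZ_rapidity hu hv, pZ_rapidity hu hw]
    simp only [mdot_sub_right, mdot_add_right, mdot_smul_right, hu, hv, hw, zero_add, mul_one]
    change _ * (b * cosh (θ - δ)) * _ * ((b * _)⁻¹ * (b * _) - (a * _)⁻¹ * (a * _)) /
      ((a * cosh θ + b * cosh (θ - δ)) ^ 2 - (a * sinh θ + b * sinh (θ - δ)) ^ 2) = _
    rw [hden, e4]
    change 2 * (a * _) * _ * (a * cosh θ + b * _) * _ / _ = _
    field_simp
    ring
  have hE : cosh (θ + h) = (a * cosh θ + b * cosh (θ - δ)) / M := by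
    rw [cosh_add, hsh, hch, cosh_sub]; field_simp; ring
  have hD : sinh (h + δ) = a * sinh δ / M := by
    rw [sinh_add, hsh, hch]; field_simp; ring
  constructor
  · have : a * sinh (θ + 2 * h) - a * sinh θ = 2 * a * cosh (θ + h) * sinh h := by
      rw [show θ + 2 * h = (θ + h) + h by ring, sinh_add (θ + h)]
      conv_lhs => rw [show sinh θ = sinh ((θ + h) - h) by congr 1; ring, sinh_sub]
      ring
    rw [this, hc, hE, hsh]; field_simp
  · have : b * sinh (θ - δ) - b * sinh (θ + 2 * h + δ)
        = -(2 * b * cosh (θ + h) * sinh (h + δ)) := by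
      rw [show θ + 2 * h + δ = (θ + h) + (h + δ) by ring,
        show θ - δ = (θ + h) - (h + δ) by ring, sinh_add (θ + h), sinh_sub (θ + h)]
      ring
    rw [this, hc, hE, hD]; field_simp

lemma prime_rapidity {α β : ℝ} {ω v w : E3} (hu : mdot α β (omHat α β ω) (omHat α β ω) = 1)
    (hv : mdot α β (omHat α β ω) v = 0) (hw : mdot α β (omHat α β ω) w = 0) (θ δ : ℝ) :
    let a := pZ α β v
    let b := pZ α β w
    let h := cmRap a b δ
    let p := v + (a * sinh θ) • omHat α β ω
    let q := w + (b * sinh (θ - δ)) • omHat α β ω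
    pPr α β p q ω = v + (a * sinh (θ + 2 * h)) • omHat α β ω ∧
      qPr α β p q ω = w + (b * sinh (θ + 2 * h + δ)) • omHat α β ω := by
  intro a b h p q
  obtain ⟨h1, h2⟩ := collC_rapidity hu hv hw θ δ
  refine ⟨?_, ?_⟩
  · rw [pPr, h1, add_assoc, ← add_smul]; congr 2; ring
  · rw [qPr, h2, add_sub_assoc, ← sub_smul]; congr 2; ring

/-- Every momentum has rapidity coordinates along a given unit direction. -/
lemma exists_rapidity {α β : ℝ} {u : E3} (hu : mdot α β u u = 1) (p : E3) :
    ∃ v : E3, ∃ θ : ℝ, mdot α β u v = 0 ∧ p = v + (pZ α β v * sinh θ) • u := by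
  refine ⟨p - mdot α β u p • u,
    arsinh (mdot α β u p / pZ α β (p - mdot α β u p • u)), ?_, ?_⟩
  · rw [mdot_sub_right, mdot_smul_right, hu]; ring
  · rw [sinh_arsinh, mul_div_cancel₀ _ (pZ_pos _ _ _).ne']; simp

/-- The collision is an involution for fixed scattering direction. -/
lemma prime_prime {α β : ℝ} (hα : 0 < α) (hβ : 0 < β) {ω : E3} (hω : ω ≠ 0) (p q : E3) :
    pPr α β (pPr α β p q ω) (qPr α β p q ω) ω = p ∧
      qPr α β (pPr α β p q ω) (qPr α β p q ω) ω = q := by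
  have hu := mdot_omHat_self hα hβ hω
  obtain ⟨v, θ, hv, rfl⟩ := exists_rapidity hu p
  obtain ⟨w, φ, hw, rfl⟩ := exists_rapidity hu q
  obtain ⟨δ, rfl⟩ : ∃ δ, φ = θ - δ := ⟨θ - φ, by ring⟩
  obtain ⟨h1, h2⟩ := prime_rapidity hu hv hw θ δ
  rw [h1, h2]
  obtain ⟨h3, h4⟩ := prime_rapidity hu hv hw
    (θ + 2 * cmRap (pZ α β v) (pZ α β w) δ) (-δ)
  rw [sub_neg_eq_add, cmRap_neg] at h3 h4
  rw [h3, h4]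
  constructor <;> congr 4 <;> ring

/-! ### Invariance of the measure under collisions -/

lemma continuous_mdot (α β : ℝ) : Continuous fun x : E3 × E3 => mdot α β x.1 x.2 := by
  unfold mdot; fun_prop

lemma continuous_pZ (α β : ℝ) : Continuous (pZ α β) :=
  Real.continuous_sqrt.comp (continuous_const.add
    ((continuous_mdot α β).comp (continuous_id.prodMk continuous_id)))

@[fun_prop]
lemma measurable_pZ (α β : ℝ) : Measurable (pZ α β) := (continuous_pZ α β).measurable

/-- The Lorentz invariant measure `dp̄ / p⁰` on momentum space. -/
noncomputable def lorMeas (α β : ℝ) : Measure E3 :=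
  volume.withDensity fun p => ENNReal.ofReal (pZ α β p)⁻¹

lemma lintegral_lorMeas (α β : ℝ) {g : E3 → ENNReal} (hg : Measurable g) :
    ∫⁻ p, g p ∂(lorMeas α β) = ∫⁻ p, ENNReal.ofReal (pZ α β p)⁻¹ * g p := by
  rw [lorMeas, lintegral_withDensity_eq_lintegral_mul _ (by fun_prop) hg]
  rfl

instance (α β : ℝ) : SigmaFinite (lorMeas α β) :=
  SigmaFinite.withDensity_of_ne_top (Filter.Eventually.of_forall fun _ => ENNReal.ofReal_ne_top)

/-- The substitution `x = a sinh θ`, under which `dx / √(a² + x²)` becomes `dθ`. -/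
lemma lintegral_rapidity {a : ℝ} (ha : 0 < a) (g : ℝ → ENNReal) :
    ∫⁻ x, g x = ∫⁻ θ, ENNReal.ofReal (a * cosh θ) * g (a * sinh θ) := by
  have h := lintegral_image_eq_lintegral_abs_deriv_mul (s := Set.univ)
    (f := fun θ => a * sinh θ) (f' := fun θ => a * cosh θ) MeasurableSet.univ
    (fun x _ => ((hasDerivAt_sinh x).const_mul a).hasDerivWithinAt)
    (fun x _ y _ hxy => sinh_injective (mul_left_cancel₀ ha.ne' hxy)) g
  have hr : (fun θ => a * sinh θ) '' Set.univ = Set.univ := by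
    rw [Set.image_univ]
    refine Set.eq_univ_of_forall fun x => ⟨arsinh (x / a), ?_⟩
    simp only [sinh_arsinh]
    field_simp
  rw [hr, Measure.restrict_univ] at h
  rw [h]
  refine lintegral_congr fun θ => ?_
  rw [abs_of_pos (mul_pos ha (cosh_pos θ))]

/-- Disintegration of the invariant measure into transverse momentum and rapidity along `u`. -/
lemma exists_disint {α β : ℝ} {u : E3} (hu : mdot α β u u = 1) :
    ∃ κ : Measure E3, SFinite κ ∧ (∀ᵐ v ∂κ, mdot α β u v = 0) ∧
      ∀ g : E3 → ENNReal, Measurable g → ∫⁻ p, g p ∂(lorMeas α β)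
        = ∫⁻ v, ∫⁻ θ, g (v + (pZ α β v * sinh θ) • u) ∂volume ∂κ := by
  let ℓ : E3 →ₗ[ℝ] ℝ :=
    { toFun := fun p => mdot α β u p
      map_add' := fun x y => mdot_add_right α β u x y
      map_smul' := fun k x => mdot_smul_right α β k u x }
  let F : Submodule ℝ E3 := LinearMap.ker ℓ
  let e₀ : (F × ℝ) ≃ₗ[ℝ] E3 :=
    { toFun := fun x => (x.1 : E3) + x.2 • u
      map_add' := fun x y => by
        simp only [Prod.fst_add, Prod.snd_add, Submodule.coe_add, add_smul]; abel
      map_smul' := fun k x => by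
        simp [smul_smul]
      invFun := fun p => (⟨p - ℓ p • u, by
        change mdot α β u _ = 0
        rw [mdot_sub_right, mdot_smul_right, hu]; simp [ℓ]⟩, ℓ p)
      left_inv := fun x => by
        obtain ⟨⟨v, hv⟩, t⟩ := x
        have hv' : ℓ v = 0 := hv
        have hu' : ℓ u = 1 := hu
        ext1
        · ext1; simp [hv', hu']
        · simp [hv', hu']
      right_inv := fun p => by simp }
  let e : (F × ℝ) ≃L[ℝ] E3 := e₀.toContinuousLinearEquiv
  let m : Measure F := Measure.addHaar
  have hH : (Measure.map e (m.prod volume)).IsAddHaarMeasure := e.isAddHaarMeasure_map _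
  obtain ⟨c, hc⟩ : ∃ c : NNReal, (volume : Measure E3) = c • Measure.map e (m.prod volume) :=
    ⟨_, Measure.isAddLeftInvariant_eq_smul _ _⟩
  have hval : Measurable (fun v : F => (v : E3)) := measurable_subtype_coe
  refine ⟨c • Measure.map (fun v : F => (v : E3)) m, inferInstance, ?_, fun g hg => ?_⟩
  · have : ∀ᵐ v ∂(Measure.map (fun v : F => (v : E3)) m), mdot α β u v = 0 := by
      rw [ae_map_iff hval.aemeasurable]
      · exact Filter.Eventually.of_forall fun v => v.2
      · exact measurableSet_eq_fun
          ((continuous_mdot α β).comp (continuous_const.prodMk continuous_id)).measurable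
          measurable_const
    exact Measure.ae_smul_measure this c
  · have hgw : Measurable fun p => ENNReal.ofReal (pZ α β p)⁻¹ * g p := by fun_prop
    have hm2 : Measurable fun v : E3 => ∫⁻ θ : ℝ, g (v + (pZ α β v * sinh θ) • u) := by
      refine Measurable.lintegral_prod_right' (f := fun x : E3 × ℝ =>
        g (x.1 + (pZ α β x.1 * sinh x.2) • u)) ?_
      have : Measurable fun x : ℝ => sinh x := measurable_sinh
      fun_prop
    rw [lintegral_lorMeas α β hg, hc, lintegral_smul_measure, lintegral_smul_measure,
      lintegral_map hgw e.continuous.measurable, lintegral_map hm2 hval,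
      lintegral_prod (fun a => ENNReal.ofReal (pZ α β (e a))⁻¹ * g (e a))
        (hgw.comp e.continuous.measurable).aemeasurable]
    congr 1
    refine lintegral_congr fun v => ?_
    rw [lintegral_rapidity (pZ_pos α β v)]
    refine lintegral_congr fun θ => ?_
    change _ * (ENNReal.ofReal (pZ α β (v + (pZ α β v * sinh θ) • u))⁻¹
      * g (v + (pZ α β v * sinh θ) • u)) = _
    rw [pZ_rapidity hu v.2, ← mul_assoc, ← ENNReal.ofReal_mul, mul_inv_cancel₀, ENNReal.ofReal_one,
      one_mul]
    · exact (mul_pos (pZ_pos α β v) (cosh_pos θ)).ne'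
    · exact (mul_pos (pZ_pos α β v) (cosh_pos θ)).le

lemma measurable_cmRap : Measurable fun x : ℝ × ℝ × ℝ => cmRap x.1 x.2.1 x.2.2 := by
  unfold cmRap
  have h1 : Measurable fun x : ℝ => sinh x := measurable_sinh
  have h2 : Measurable fun x : ℝ => cosh x := measurable_cosh
  have h3 : Measurable fun x : ℝ => arsinh x := continuous_arsinh.measurable
  fun_prop

/-- In the rapidity plane the collision is a composition of the reflection `δ ↦ -δ` of the
rapidity difference and a shear, so it preserves Lebesgue measure. -/
lemma lintegral_shear {h : ℝ → ℝ} (hh : Measurable h) {G : ℝ → ℝ → ENNReal}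
    (hG : Measurable (Function.uncurry G)) :
    ∫⁻ θ, ∫⁻ φ, G (θ + 2 * h (θ - φ)) (θ + 2 * h (θ - φ) + (θ - φ))
      = ∫⁻ θ, ∫⁻ φ, G θ φ := by
  calc ∫⁻ θ, ∫⁻ φ, G (θ + 2 * h (θ - φ)) (θ + 2 * h (θ - φ) + (θ - φ))
      = ∫⁻ θ, ∫⁻ δ, G (θ + 2 * h δ) (θ + 2 * h δ + δ) := by
        refine lintegral_congr fun θ => ?_
        exact lintegral_sub_left_eq_self
          (fun δ => G (θ + 2 * h δ) (θ + 2 * h δ + δ)) θ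
    _ = ∫⁻ δ, ∫⁻ θ, G (θ + 2 * h δ) (θ + 2 * h δ + δ) := by
        refine lintegral_lintegral_swap (Measurable.aemeasurable ?_)
        have : (Function.uncurry fun θ δ => G (θ + 2 * h δ) (θ + 2 * h δ + δ)) =
          (Function.uncurry G) ∘ fun x : ℝ × ℝ => (x.1 + 2 * h x.2, x.1 + 2 * h x.2 + x.2) := rfl
        rw [this]
        fun_prop
    _ = ∫⁻ δ, ∫⁻ θ, G θ (θ + δ) := by
        refine lintegral_congr fun δ => ?_
        exact lintegral_add_right_eq_self (fun θ => G θ (θ + δ)) (2 * h δ)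
    _ = ∫⁻ θ, ∫⁻ δ, G θ (θ + δ) := by
        refine lintegral_lintegral_swap (Measurable.aemeasurable ?_)
        have : (Function.uncurry fun δ θ => G θ (θ + δ)) =
          (Function.uncurry G) ∘ fun x : ℝ × ℝ => (x.2, x.2 + x.1) := rfl
        rw [this]
        fun_prop
    _ = ∫⁻ θ, ∫⁻ φ, G θ φ := by
        refine lintegral_congr fun θ => ?_
        exact lintegral_add_left_eq_self (fun δ => G θ δ) θ

lemma measurable_omHat (α β : ℝ) : Measurable (omHat α β) := by
  unfold omHat
  have : Measurable fun x : E3 => mdot α β x x :=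
    ((continuous_mdot α β).comp (continuous_id.prodMk continuous_id)).measurable
  fun_prop

lemma measurable_collC (α β : ℝ) :
    Measurable fun x : (E3 × E3) × E3 => collC α β x.1.1 x.1.2 x.2 := by
  have h1 := (continuous_mdot α β).measurable
  have h2 := measurable_omHat α β
  have h3 := measurable_pZ α β
  have h4 : Measurable fun x : (E3 × E3) × E3 => mdot α β (omHat α β x.2)
      ((pZ α β x.1.2)⁻¹ • x.1.2 - (pZ α β x.1.1)⁻¹ • x.1.1) :=
    h1.comp (f := fun x : (E3 × E3) × E3 => (omHat α β x.2,
      (pZ α β x.1.2)⁻¹ • x.1.2 - (pZ α β x.1.1)⁻¹ • x.1.1)) (by fun_prop)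
  have h5 : Measurable fun x : (E3 × E3) × E3 => mdot α β (omHat α β x.2) (x.1.1 + x.1.2) :=
    h1.comp (f := fun x : (E3 × E3) × E3 => (omHat α β x.2, x.1.1 + x.1.2)) (by fun_prop)
  unfold collC collE
  fun_prop

lemma measurable_pPr (α β : ℝ) :
    Measurable fun x : (E3 × E3) × E3 => pPr α β x.1.1 x.1.2 x.2 := by
  have h1 := measurable_collC α β
  have h2 := measurable_omHat α β
  unfold pPr
  fun_prop

lemma measurable_qPr (α β : ℝ) :
    Measurable fun x : (E3 × E3) × E3 => qPr α β x.1.1 x.1.2 x.2 := by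
  have h1 := measurable_collC α β
  have h2 := measurable_omHat α β
  unfold qPr
  fun_prop

/-- Invariance of `(dp̄ / p⁰)(dq̄ / q⁰)` under the collision map with fixed scattering direction. -/
lemma lintegral_collision {α β : ℝ} (hα : 0 < α) (hβ : 0 < β) {ω : E3} (hω : ω ≠ 0)
    {G : E3 × E3 → ENNReal} (hG : Measurable G) :
    ∫⁻ x, G (pPr α β x.1 x.2 ω, qPr α β x.1 x.2 ω) ∂((lorMeas α β).prod (lorMeas α β))
      = ∫⁻ x, G x ∂((lorMeas α β).prod (lorMeas α β)) := by
  have hu := mdot_omHat_self hα hβ hω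
  obtain ⟨κ, hκ, hperp, hdis⟩ := exists_disint hu
  set u := omHat α β ω
  have hsinh : Measurable fun x : ℝ => sinh x := measurable_sinh
  -- Both sides written in transverse momenta `v`, `w` and rapidities `θ`, `φ`.
  have key : ∀ H : E3 × E3 → ENNReal, Measurable H →
      ∫⁻ x, H x ∂((lorMeas α β).prod (lorMeas α β)) =
        ∫⁻ v, ∫⁻ w, ∫⁻ θ, ∫⁻ φ, H (v + (pZ α β v * sinh θ) • u, w + (pZ α β w * sinh φ) • u)
          ∂volume ∂volume ∂κ ∂κ := by
    intro H hH
    have m1 : Measurable fun p => ∫⁻ q, H (p, q) ∂(lorMeas α β) := hH.lintegral_prod_right'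
    rw [lintegral_prod _ hH.aemeasurable, hdis _ m1]
    refine lintegral_congr fun v => ?_
    have : ∀ θ : ℝ, ∫⁻ q, H (v + (pZ α β v * sinh θ) • u, q) ∂(lorMeas α β) =
        ∫⁻ w, ∫⁻ φ, H (v + (pZ α β v * sinh θ) • u, w + (pZ α β w * sinh φ) • u)
          ∂volume ∂κ := fun θ => hdis _ (by fun_prop)
    simp_rw [this]
    refine lintegral_lintegral_swap (Measurable.aemeasurable ?_)
    refine Measurable.lintegral_prod_right' (f := fun x : (ℝ × E3) × ℝ =>
      H (v + (pZ α β v * sinh x.1.1) • u, x.1.2 + (pZ α β x.1.2 * sinh x.2) • u)) ?_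
    fun_prop
  have mT : Measurable fun x : E3 × E3 => (pPr α β x.1 x.2 ω, qPr α β x.1 x.2 ω) :=
    ((measurable_pPr α β).comp (measurable_id.prodMk measurable_const)).prodMk
      ((measurable_qPr α β).comp (measurable_id.prodMk measurable_const))
  rw [key _ hG, key (fun x => G (pPr α β x.1 x.2 ω, qPr α β x.1 x.2 ω)) (hG.comp mT)]
  refine lintegral_congr_ae ?_
  filter_upwards [hperp] with v hv
  refine lintegral_congr_ae ?_
  filter_upwards [hperp] with w hw
  have hc : Measurable (cmRap (pZ α β v) (pZ α β w)) :=
    measurable_cmRap.comp (measurable_const.prodMk (measurable_const.prodMk measurable_id))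
  rw [← lintegral_shear (G := fun θ φ =>
    G (v + (pZ α β v * sinh θ) • u, w + (pZ α β w * sinh φ) • u)) hc
    (by unfold Function.uncurry; fun_prop)]
  refine lintegral_congr fun θ => lintegral_congr fun φ => ?_
  obtain ⟨h1, h2⟩ := prime_rapidity hu hv hw θ (θ - φ)
  rw [sub_sub_cancel] at h1 h2
  rw [h1, h2]

/-! ### The collision operator -/

/-- Collision configurations `(p̄, q̄, ω)`. -/
abbrev Conf : Type := E3 × (E3 × Metric.sphere (0 : E3) 1)

instance : IsFiniteMeasure sphMeas := by unfold sphMeas; infer_instance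

/-- The measure `(dp̄ / p⁰)(dq̄ / q⁰) dω` on collision configurations. -/
noncomputable def confMeas (α β : ℝ) : Measure Conf :=
  (lorMeas α β).prod ((lorMeas α β).prod sphMeas)

/-- The collision map `(p̄, q̄, ω) ↦ (p̄′, q̄′, ω)`. -/
noncomputable def collMap (α β : ℝ) (x : Conf) : Conf :=
  (pPr α β x.1 x.2.1 x.2.2, (qPr α β x.1 x.2.1 x.2.2, x.2.2))

lemma measurable_collMap (α β : ℝ) : Measurable (collMap α β) := by
  have h : Measurable fun x : Conf => (((x.1, x.2.1), (x.2.2 : E3)) : (E3 × E3) × E3) := by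
    fun_prop
  exact ((measurable_pPr α β).comp h).prodMk
    (((measurable_qPr α β).comp h).prodMk (by fun_prop))

lemma sphere_ne_zero (ω : Metric.sphere (0 : E3) 1) : (ω : E3) ≠ 0 :=
  ne_zero_of_mem_unit_sphere ω

lemma lintegral_confMeas (α β : ℝ) {H : Conf → ENNReal} (hH : Measurable H) :
    ∫⁻ x, H x ∂(confMeas α β) = ∫⁻ ω, ∫⁻ x : E3 × E3, H (x.1, (x.2, ω))
      ∂((lorMeas α β).prod (lorMeas α β)) ∂sphMeas := by
  have h := measurePreserving_prodAssoc (lorMeas α β) (lorMeas α β) sphMeas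
  have hm : Measurable fun x : (E3 × E3) × Metric.sphere (0 : E3) 1 =>
    H (x.1.1, (x.1.2, x.2)) := by fun_prop
  rw [confMeas, ← h.lintegral_comp hH]
  exact lintegral_prod_symm _ hm.aemeasurable

/-- The collision map preserves `confMeas`; this replaces the computation of its Jacobian. -/
lemma measurePreserving_collMap {α β : ℝ} (hα : 0 < α) (hβ : 0 < β) :
    MeasurePreserving (collMap α β) (confMeas α β) (confMeas α β) := by
  refine ⟨measurable_collMap α β, Measure.ext_of_lintegral _ fun H hH => ?_⟩
  rw [lintegral_map hH (measurable_collMap α β),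
    lintegral_confMeas α β (H := fun x => H (collMap α β x))
      (hH.comp (measurable_collMap α β)), lintegral_confMeas α β hH]
  refine lintegral_congr fun ω => ?_
  exact lintegral_collision hα hβ (sphere_ne_zero ω) (G := fun x => H (x.1, (x.2, ω)))
    (by fun_prop)

/-- The scattering kernel evaluated on a configuration and its image under the collision. -/
noncomputable def kern (α β : ℝ) (S₀ : E3 → E3 → E3 → E3 → ℝ) (x : Conf) : ℝ :=
  S₀ x.1 x.2.1 (collMap α β x).1 (collMap α β x).2.1

/-- The integrand of the loss term. -/
noncomputable def lossInt (α β : ℝ) (S₀ : E3 → E3 → E3 → E3 → ℝ) (f g : E3 → ℝ) (x : Conf) : ℝ :=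
  f x.1 * g x.2.1 * kern α β S₀ x

/-- The integrand of the collision operator: gain minus loss. The gain is the loss integrand
composed with the collision map, because the kernel is invariant under it. -/
noncomputable def netInt (α β : ℝ) (S₀ : E3 → E3 → E3 → E3 → ℝ) (f : E3 → ℝ) (x : Conf) : ℝ :=
  lossInt α β S₀ f f (collMap α β x) - lossInt α β S₀ f f x

section
variable {α β C₁ : ℝ} {S₀ : E3 → E3 → E3 → E3 → ℝ}

lemma kern_collMap (hα : 0 < α) (hβ : 0 < β)
    (hsymm : ∀ p q p' q', S₀ p q p' q' = S₀ p' q' p q) (x : Conf) :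
    kern α β S₀ (collMap α β x) = kern α β S₀ x := by
  obtain ⟨h1, h2⟩ := prime_prime hα hβ (sphere_ne_zero x.2.2) x.1 x.2.1
  simp only [kern, collMap]
  rw [h1, h2, hsymm]

lemma measurable_kern (α β : ℝ)
    (hm : Measurable fun x : (E3 × E3) × E3 × E3 => S₀ x.1.1 x.1.2 x.2.1 x.2.2) :
    Measurable (kern α β S₀) := by
  have h := measurable_collMap α β
  exact hm.comp (f := fun x : Conf =>
    (((x.1, x.2.1), ((collMap α β x).1, (collMap α β x).2.1)) : (E3 × E3) × E3 × E3))
    ((measurable_fst.prodMk measurable_snd.fst).prodMk (h.fst.prodMk h.snd.fst))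

lemma lorMeas_le (α β : ℝ) : lorMeas α β ≤ volume := by
  conv_rhs => rw [← withDensity_one (μ := (volume : Measure E3))]
  refine withDensity_mono (Filter.Eventually.of_forall fun p => ?_)
  simp only [Pi.one_apply]
  exact ENNReal.ofReal_le_one.2 (inv_le_one_of_one_le₀ (one_le_pZ α β p))

lemma volume_ac_lorMeas (α β : ℝ) : (volume : Measure E3) ≪ lorMeas α β := by
  refine withDensity_absolutelyContinuous' (Measurable.aemeasurable (by fun_prop))
    (Filter.Eventually.of_forall fun p => ?_)
  simpa using pZ_pos α β p

lemma integral_lorMeas (α β : ℝ) (g : E3 → ℝ) :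
    ∫ p, g p ∂(lorMeas α β) = ∫ p, (pZ α β p)⁻¹ * g p := by
  rw [lorMeas, integral_withDensity_eq_integral_toReal_smul (by fun_prop)
    (Filter.Eventually.of_forall fun _ => ENNReal.ofReal_lt_top)]
  refine integral_congr_ae (Filter.Eventually.of_forall fun p => ?_)
  simp only [smul_eq_mul]
  rw [ENNReal.toReal_ofReal (inv_nonneg.2 (pZ_pos α β p).le)]

lemma integrable_lorMeas (α β : ℝ) {g : E3 → ℝ} (hg : Integrable g (lorMeas α β)) :
    Integrable fun p => (pZ α β p)⁻¹ * g p := by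
  rw [lorMeas, integrable_withDensity_iff_integrable_smul' (by fun_prop)
    (Filter.Eventually.of_forall fun _ => ENNReal.ofReal_lt_top)] at hg
  refine hg.congr (Filter.Eventually.of_forall fun p => ?_)
  simp only [smul_eq_mul]
  rw [ENNReal.toReal_ofReal (inv_nonneg.2 (pZ_pos α β p).le)]

lemma integral_norm_lorMeas_le {f : E3 → ℝ} (hf : Integrable f) :
    ∫ p, |f p| ∂(lorMeas α β) ≤ ∫ p, |f p| :=
  integral_mono_measure (lorMeas_le α β) (Filter.Eventually.of_forall fun _ => abs_nonneg _)
    hf.abs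

lemma sphMeas_univ : sphMeas.real Set.univ = 4 * π := by
  rw [Measure.real, sphMeas, Measure.toSphere_apply_univ, EuclideanSpace.volume_ball_fin_three]
  simp only [finrank_euclideanSpace, Fintype.card_fin, ENNReal.ofReal_one, one_pow, one_mul]
  rw [ENNReal.toReal_mul, ENNReal.toReal_ofReal (by positivity)]
  norm_num
  ring

lemma integrable_tensor {f g : E3 → ℝ} (hf : Integrable f) (hg : Integrable g) :
    Integrable (fun x : Conf => f x.1 * g x.2.1) (confMeas α β) := by
  have h1 := hf.mono_measure (lorMeas_le α β)
  have h2 := hg.mono_measure (lorMeas_le α β)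
  have h3 := h1.mul_prod (h2.mul_prod (integrable_const (1 : ℝ) (μ := sphMeas)))
  simp only [mul_one] at h3
  exact h3

lemma integral_tensor_le {f g : E3 → ℝ} (hf : Integrable f) (hg : Integrable g) :
    ∫ x : Conf, |f x.1| * |g x.2.1| ∂(confMeas α β)
      ≤ 4 * π * ((∫ p, |f p|) * ∫ p, |g p|) := by
  have h : ∫ x : Conf, |f x.1| * |g x.2.1| ∂(confMeas α β)
      = (∫ p, |f p| ∂(lorMeas α β)) * ((∫ p, |g p| ∂(lorMeas α β)) * (4 * π)) := by
    have h1 := integral_prod_mul (μ := lorMeas α β) (ν := (lorMeas α β).prod sphMeas)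
      (fun p => |f p|) (fun y => |g y.1| * 1)
    have h2 := integral_prod_mul (μ := lorMeas α β) (ν := sphMeas)
      (fun p => |g p|) (fun _ => (1 : ℝ))
    rw [h2] at h1
    simp only [mul_one, integral_const, smul_eq_mul, sphMeas_univ] at h1
    exact h1
  rw [h]
  have hf' := integral_norm_lorMeas_le (α := α) (β := β) hf
  have hg' := integral_norm_lorMeas_le (α := α) (β := β) hg
  have h0 : 0 ≤ ∫ p, |g p| ∂(lorMeas α β) := integral_nonneg fun _ => abs_nonneg _
  have h0' : 0 ≤ ∫ p, |f p| := integral_nonneg fun _ => abs_nonneg _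
  have := mul_le_mul hf' hg' h0 h0'
  nlinarith [pi_pos]

lemma integrable_lossInt
    (hm : Measurable fun x : (E3 × E3) × E3 × E3 => S₀ x.1.1 x.1.2 x.2.1 x.2.2)
    (h0 : ∀ p q p' q', 0 ≤ S₀ p q p' q') (h1 : ∀ p q p' q', S₀ p q p' q' ≤ C₁)
    {f g : E3 → ℝ} (hf : Integrable f) (hg : Integrable g) :
    Integrable (lossInt α β S₀ f g) (confMeas α β) := by
  refine (integrable_tensor hf hg).mul_bdd (c := C₁)
    (measurable_kern α β hm).aestronglyMeasurable (Filter.Eventually.of_forall fun x => ?_)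
  rw [Real.norm_eq_abs, kern, abs_of_nonneg (h0 _ _ _ _)]
  exact h1 _ _ _ _

lemma integral_lossInt_le
    (h0 : ∀ p q p' q', 0 ≤ S₀ p q p' q') (h1 : ∀ p q p' q', S₀ p q p' q' ≤ C₁) (hC : 0 ≤ C₁)
    {f g : E3 → ℝ} (hf : Integrable f) (hg : Integrable g) :
    ∫ x, |lossInt α β S₀ f g x| ∂(confMeas α β)
      ≤ 4 * π * C₁ * ((∫ p, |f p|) * ∫ p, |g p|) := by
  calc ∫ x, |lossInt α β S₀ f g x| ∂(confMeas α β)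
      ≤ ∫ x : Conf, C₁ * (|f x.1| * |g x.2.1|) ∂(confMeas α β) := by
        refine integral_mono_of_nonneg (Filter.Eventually.of_forall fun _ => abs_nonneg _)
          ((integrable_tensor hf.abs hg.abs).const_mul _)
          (Filter.Eventually.of_forall fun x => ?_)
        simp only [lossInt, abs_mul, kern]
        rw [abs_of_nonneg (h0 _ _ _ _), mul_comm C₁]
        exact mul_le_mul_of_nonneg_left (h1 _ _ _ _) (by positivity)
    _ = C₁ * ∫ x : Conf, |f x.1| * |g x.2.1| ∂(confMeas α β) := integral_const_mul _ _
    _ ≤ C₁ * (4 * π * ((∫ p, |f p|) * ∫ p, |g p|)) :=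
        mul_le_mul_of_nonneg_left (integral_tensor_le hf hg) hC
    _ = _ := by ring

lemma integrable_netInt (hα : 0 < α) (hβ : 0 < β)
    (hm : Measurable fun x : (E3 × E3) × E3 × E3 => S₀ x.1.1 x.1.2 x.2.1 x.2.2)
    (h0 : ∀ p q p' q', 0 ≤ S₀ p q p' q') (h1 : ∀ p q p' q', S₀ p q p' q' ≤ C₁)
    {f : E3 → ℝ} (hf : Integrable f) :
    Integrable (netInt α β S₀ f) (confMeas α β) := by
  have h := integrable_lossInt (α := α) (β := β) hm h0 h1 hf hf
  exact ((measurePreserving_collMap hα hβ).integrable_comp_of_integrable h).sub h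

/-- Conservation of the particle number. -/
lemma integral_netInt (hα : 0 < α) (hβ : 0 < β)
    (hm : Measurable fun x : (E3 × E3) × E3 × E3 => S₀ x.1.1 x.1.2 x.2.1 x.2.2)
    (h0 : ∀ p q p' q', 0 ≤ S₀ p q p' q') (h1 : ∀ p q p' q', S₀ p q p' q' ≤ C₁)
    {f : E3 → ℝ} (hf : Integrable f) :
    ∫ x, netInt α β S₀ f x ∂(confMeas α β) = 0 := by
  have h := integrable_lossInt (α := α) (β := β) hm h0 h1 hf hf
  have hT := measurePreserving_collMap hα hβ
  have h2 : ∫ x, lossInt α β S₀ f f (collMap α β x) ∂(confMeas α β)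
      = ∫ x, lossInt α β S₀ f f x ∂(confMeas α β) := by
    conv_rhs => rw [← hT.map_eq]
    rw [integral_map hT.measurable.aemeasurable]
    rw [hT.map_eq]
    exact h.aestronglyMeasurable
  have h3 : Integrable (fun x => lossInt α β S₀ f f (collMap α β x)) (confMeas α β) :=
    hT.integrable_comp_of_integrable h
  unfold netInt
  rw [integral_sub h3 h, h2, sub_self]

/-- The quadratic map `f ↦ netInt f` is locally Lipschitz from `L¹` to `L¹`: write
`f ⊗ f - g ⊗ g = f ⊗ (f - g) + (f - g) ⊗ g`; gain and loss contribute equally. -/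
lemma integral_netInt_sub_le (hα : 0 < α) (hβ : 0 < β)
    (hm : Measurable fun x : (E3 × E3) × E3 × E3 => S₀ x.1.1 x.1.2 x.2.1 x.2.2)
    (h0 : ∀ p q p' q', 0 ≤ S₀ p q p' q') (h1 : ∀ p q p' q', S₀ p q p' q' ≤ C₁) (hC : 0 ≤ C₁)
    {f g : E3 → ℝ} (hf : Integrable f) (hg : Integrable g) :
    ∫ x, |netInt α β S₀ f x - netInt α β S₀ g x| ∂(confMeas α β)
      ≤ 2 * (4 * π * C₁ * (((∫ p, |f p|) + ∫ p, |g p|) * ∫ p, |f p - g p|)) := by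
  have hT := measurePreserving_collMap hα hβ
  have hfg : Integrable (fun p => f p - g p) := hf.sub hg
  have i1 := integrable_lossInt (α := α) (β := β) hm h0 h1 hf hfg
  have i2 := integrable_lossInt (α := α) (β := β) hm h0 h1 hfg hg
  set Λ : Conf → ℝ := fun x => |lossInt α β S₀ f (fun p => f p - g p) x|
    + |lossInt α β S₀ (fun p => f p - g p) g x| with hΛ
  have iΛ : Integrable Λ (confMeas α β) := i1.abs.add i2.abs
  have hle : ∀ x, |lossInt α β S₀ f f x - lossInt α β S₀ g g x| ≤ Λ x := fun x => by
    have : lossInt α β S₀ f f x - lossInt α β S₀ g g x =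
      lossInt α β S₀ f (fun p => f p - g p) x + lossInt α β S₀ (fun p => f p - g p) g x := by
      simp only [lossInt]; ring
    rw [this]; exact abs_add_le _ _
  have hint : ∫ x, Λ x ∂(confMeas α β)
      ≤ 4 * π * C₁ * (((∫ p, |f p|) + ∫ p, |g p|) * ∫ p, |f p - g p|) := by
    rw [hΛ, integral_add i1.abs i2.abs]
    have k1 := integral_lossInt_le (α := α) (β := β) h0 h1 hC hf hfg
    have k2 := integral_lossInt_le (α := α) (β := β) h0 h1 hC hfg hg
    linarith
  have hcomp : ∫ x, Λ (collMap α β x) ∂(confMeas α β) = ∫ x, Λ x ∂(confMeas α β) := by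
    conv_rhs => rw [← hT.map_eq]
    rw [integral_map hT.measurable.aemeasurable]
    rw [hT.map_eq]
    exact iΛ.aestronglyMeasurable
  calc ∫ x, |netInt α β S₀ f x - netInt α β S₀ g x| ∂(confMeas α β)
      ≤ ∫ x, (Λ (collMap α β x) + Λ x) ∂(confMeas α β) := by
        refine integral_mono_of_nonneg (Filter.Eventually.of_forall fun _ => abs_nonneg _)
          ((hT.integrable_comp_of_integrable iΛ).add iΛ) (Filter.Eventually.of_forall fun x => ?_)
        have a1 := hle (collMap α β x)
        have a2 := hle x
        simp only [netInt]
        rw [abs_le] at *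
        constructor <;> linarith [a1.1, a1.2, a2.1, a2.2]
    _ = ∫ x, Λ (collMap α β x) ∂(confMeas α β) + ∫ x, Λ x ∂(confMeas α β) :=
        integral_add (hT.integrable_comp_of_integrable iΛ) iΛ
    _ ≤ _ := by rw [hcomp]; linarith

/-- The collision operator as an integral of `netInt` over `(q̄, ω)`. -/
lemma Qcoll_ae_eq (hα : 0 < α) (hβ : 0 < β)
    (hm : Measurable fun x : (E3 × E3) × E3 × E3 => S₀ x.1.1 x.1.2 x.2.1 x.2.2)
    (h0 : ∀ p q p' q', 0 ≤ S₀ p q p' q') (h1 : ∀ p q p' q', S₀ p q p' q' ≤ C₁)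
    (hsymm : ∀ p q p' q', S₀ p q p' q' = S₀ p' q' p q)
    {f : E3 → ℝ} (hf : Integrable f) :
    ∀ᵐ p, Qcoll α β S₀ f f p
      = α * β ^ 2 * ∫ y, netInt α β S₀ f (p, y) ∂((lorMeas α β).prod sphMeas) := by
  refine (volume_ac_lorMeas α β).ae_le ?_
  have h := integrable_lossInt (α := α) (β := β) hm h0 h1 hf hf
  have hg : Integrable (fun x => lossInt α β S₀ f f (collMap α β x)) (confMeas α β) :=
    (measurePreserving_collMap hα hβ).integrable_comp_of_integrable h
  filter_upwards [h.prod_right_ae, hg.prod_right_ae] with p hp hp'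
  unfold netInt
  rw [integral_sub hp' hp, integral_prod _ hp', integral_prod _ hp, integral_lorMeas,
    integral_lorMeas, mul_sub]
  unfold Qcoll Qplus Qminus
  congr! 8 with q ω
  simp only [lossInt]
  rw [kern_collMap hα hβ hsymm]
  rfl

end

/-! ### The resolvent equation -/

section
variable {α β C₁ : ℝ} {S₀ : E3 → E3 → E3 → E3 → ℝ}

lemma norm_eq_integral_abs (f : L1) : ‖f‖ = ∫ p, |f p| := by
  rw [L1.norm_eq_integral_norm]; rfl

lemma norm_eq_integral_of_nonneg {f : L1} (hf : 0 ≤ᵐ[volume] ⇑f) : ‖f‖ = ∫ p, f p := by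
  rw [norm_eq_integral_abs]
  refine integral_congr_ae ?_
  filter_upwards [hf] with p hp using abs_of_nonneg hp

/-- The resolvent equation scales the total mass by `s`, since collisions conserve it. -/
lemma resolvent_mass (hα : 0 < α) (hβ : 0 < β)
    (hm : Measurable fun x : (E3 × E3) × E3 × E3 => S₀ x.1.1 x.1.2 x.2.1 x.2.2)
    (h0 : ∀ p q p' q', 0 ≤ S₀ p q p' q') (h1 : ∀ p q p' q', S₀ p q p' q' ≤ C₁)
    (hsymm : ∀ p q p' q', S₀ p q p' q' = S₀ p' q' p q) {s : ℝ} {f u : L1}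
    (h : (fun p : E3 => s * f p - (pZ α β p)⁻¹ * Qcoll α β S₀ (⇑f) (⇑f) p) =ᵐ[volume] ⇑u)
    (hf : 0 ≤ᵐ[volume] ⇑f) (hu : 0 ≤ᵐ[volume] ⇑u) : s * ‖f‖ = ‖u‖ := by
  have fi : Integrable (⇑f) := L1.integrable_coeFn f
  have hnet := integrable_netInt hα hβ hm h0 h1 fi
  have hint := hnet.integral_prod_left
  have hz : ∫ p, (pZ α β p)⁻¹ *
      ∫ y, netInt α β S₀ f (p, y) ∂((lorMeas α β).prod sphMeas) = 0 := by
    rw [← integral_lorMeas, ← integral_netInt hα hβ hm h0 h1 fi]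
    exact (integral_prod _ hnet).symm
  have hint' := integrable_lorMeas α β hint
  rw [norm_eq_integral_of_nonneg hf, norm_eq_integral_of_nonneg hu, ← integral_congr_ae h]
  have hQ := Qcoll_ae_eq hα hβ hm h0 h1 hsymm fi
  have e : (fun p : E3 => s * f p - (pZ α β p)⁻¹ * Qcoll α β S₀ (⇑f) (⇑f) p) =ᵐ[volume]
      fun p => s * f p - α * β ^ 2 * ((pZ α β p)⁻¹ *
        ∫ y, netInt α β S₀ f (p, y) ∂((lorMeas α β).prod sphMeas)) := by
    filter_upwards [hQ] with p hp
    rw [hp]; ring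
  rw [integral_congr_ae e, integral_sub (fi.const_mul s) (hint'.const_mul _), integral_const_mul,
    integral_const_mul, hz]
  ring

/-- Stability of the resolvent equation. The collision term is quadratic with an `L¹` bound, so the
difference of two solutions is controlled by their norms; no sign condition is needed. -/
lemma resolvent_lip (hα : 0 < α) (hβ : 0 < β)
    (hm : Measurable fun x : (E3 × E3) × E3 × E3 => S₀ x.1.1 x.1.2 x.2.1 x.2.2)
    (h0 : ∀ p q p' q', 0 ≤ S₀ p q p' q') (h1 : ∀ p q p' q', S₀ p q p' q' ≤ C₁) (hC : 0 ≤ C₁)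
    (hsymm : ∀ p q p' q', S₀ p q p' q' = S₀ p' q' p q) {s : ℝ} (hs : 0 ≤ s) {f g u v : L1}
    (hfu : (fun p : E3 => s * f p - (pZ α β p)⁻¹ * Qcoll α β S₀ (⇑f) (⇑f) p) =ᵐ[volume] ⇑u)
    (hgv : (fun p : E3 => s * g p - (pZ α β p)⁻¹ * Qcoll α β S₀ (⇑g) (⇑g) p) =ᵐ[volume] ⇑v) :
    s * ‖f - g‖ ≤ ‖u - v‖
      + 2 * (4 * π * C₁ * α * β ^ 2) * (‖f‖ + ‖g‖) * ‖f - g‖ := by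
  have fi : Integrable (⇑f) := L1.integrable_coeFn f
  have gi : Integrable (⇑g) := L1.integrable_coeFn g
  have uvi : Integrable (⇑(u - v)) := L1.integrable_coeFn (u - v)
  have nf := integrable_netInt hα hβ hm h0 h1 fi
  have ng := integrable_netInt hα hβ hm h0 h1 gi
  have hfg : ∫ p, |f p - g p| = ‖f - g‖ := by
    rw [norm_eq_integral_abs]
    refine integral_congr_ae ?_
    filter_upwards [Lp.coeFn_sub f g] with p hp
    rw [hp]; rfl
  have hD := integral_netInt_sub_le hα hβ hm h0 h1 hC fi gi
  rw [hfg, ← norm_eq_integral_abs, ← norm_eq_integral_abs] at hD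
  have nd : Integrable (fun x => |netInt α β S₀ f x - netInt α β S₀ g x|) (confMeas α β) :=
    (nf.sub ng).abs
  -- The marginal in `p̄` of the total variation of the difference of the collision integrands.
  set D : E3 → ℝ := fun p => ∫ y, |netInt α β S₀ f (p, y) - netInt α β S₀ g (p, y)|
    ∂((lorMeas α β).prod sphMeas) with hDdef
  have Di : Integrable D (lorMeas α β) := nd.integral_prod_left
  have Di' := integrable_lorMeas α β Di
  have hDint : ∫ p, (pZ α β p)⁻¹ * D p
      = ∫ x, |netInt α β S₀ f x - netInt α β S₀ g x| ∂(confMeas α β) := by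
    rw [← integral_lorMeas]
    exact (integral_prod _ nd).symm
  have hpt : ∀ᵐ p, s * |f p - g p| ≤ |(u - v) p| + α * β ^ 2 * ((pZ α β p)⁻¹ * D p) := by
    filter_upwards [hfu, hgv, Lp.coeFn_sub u v, Qcoll_ae_eq hα hβ hm h0 h1 hsymm fi,
      Qcoll_ae_eq hα hβ hm h0 h1 hsymm gi, (volume_ac_lorMeas α β).ae_le nf.prod_right_ae,
      (volume_ac_lorMeas α β).ae_le ng.prod_right_ae] with p e1 e2 e3 e4 e5 i1 i2
    have hp := inv_nonneg.2 (pZ_pos α β p).le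
    have hd : |(∫ y, netInt α β S₀ f (p, y) ∂((lorMeas α β).prod sphMeas))
        - ∫ y, netInt α β S₀ g (p, y) ∂((lorMeas α β).prod sphMeas)| ≤ D p := by
      rw [← integral_sub i1 i2]
      exact abs_integral_le_integral_abs
    rw [e4] at e1
    rw [e5] at e2
    have e6 : s * (f p - g p) = (u - v) p + α * β ^ 2 * ((pZ α β p)⁻¹ *
        ((∫ y, netInt α β S₀ f (p, y) ∂((lorMeas α β).prod sphMeas))
        - ∫ y, netInt α β S₀ g (p, y) ∂((lorMeas α β).prod sphMeas))) := by
      rw [e3, Pi.sub_apply, ← e1, ← e2]; ring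
    calc s * |f p - g p| = |s * (f p - g p)| := by rw [abs_mul, abs_of_nonneg hs]
      _ ≤ |(u - v) p| + |α * β ^ 2 * ((pZ α β p)⁻¹ * _)| := by
          rw [e6]; exact abs_add_le _ _
      _ ≤ _ := by
          rw [abs_mul (α * β ^ 2), abs_mul (pZ α β p)⁻¹, abs_of_nonneg hp,
            abs_of_nonneg (by positivity : 0 ≤ α * β ^ 2)]
          gcongr
  have hI := integral_mono_ae ((fi.sub gi).abs.const_mul s)
    (uvi.abs.add (Di'.const_mul (α * β ^ 2))) hpt
  simp only [Pi.add_apply] at hI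
  rw [integral_const_mul, integral_add uvi.abs (Di'.const_mul (α * β ^ 2)), integral_const_mul,
    hDint, ← norm_eq_integral_abs] at hI
  simp only [Pi.sub_apply] at hI
  rw [hfg] at hI
  have := mul_le_mul_of_nonneg_left hD (by positivity : 0 ≤ α * β ^ 2)
  nlinarith

end

/-! ### Ordinary differential equations in convex sets -/

/-- Gronwall uniqueness for an autonomous field that is Lipschitz on a set `X` only. -/
lemma ode_unique {E : Type*} [NormedAddCommGroup E] [NormedSpace ℝ E]
    {X : Set E} {v : E → E} {K : NNReal} (hv : LipschitzOnWith K v X) {T : ℝ} {f g : ℝ → E}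
    (hf : ContinuousOn f (Set.Icc 0 T)) (hg : ContinuousOn g (Set.Icc 0 T))
    (hf' : ∀ t ∈ Set.Ico 0 T, HasDerivWithinAt f (v (f t)) (Set.Ici t) t)
    (hg' : ∀ t ∈ Set.Ico 0 T, HasDerivWithinAt g (v (g t)) (Set.Ici t) t)
    (hfX : ∀ t ∈ Set.Ico 0 T, f t ∈ X) (hgX : ∀ t ∈ Set.Ico 0 T, g t ∈ X)
    (h0 : f 0 = g 0) : Set.EqOn f g (Set.Icc 0 T) :=
  ODE_solution_unique_of_mem_Icc_right (v := fun _ => v) (s := fun _ => X) (K := K)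
    (fun _ _ => hv) hf hf' hfX hg hg' hgX h0

/-- Existence on a bounded interval for `y' = n (N y - y)` inside a bounded closed convex set `X`
that is invariant under `N`. The retraction `P` makes the field globally defined, and the
integrating factor `exp (n t)` removes its unbounded linear part. -/
lemma ode_exists_Icc {E : Type*} [NormedAddCommGroup E] [NormedSpace ℝ E] [CompleteSpace E]
    {X : Set E} (hXc : IsClosed X) (hXconv : Convex ℝ X) {ρ : ℝ} (hXb : ∀ x ∈ X, ‖x‖ ≤ ρ)
    {P : E → E} {KP : NNReal} (hP : LipschitzWith KP P) (hPX : ∀ x, P x ∈ X)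
    (hPid : ∀ x ∈ X, P x = x)
    {N : E → E} {KN : NNReal} (hN : LipschitzOnWith KN N X) (hNX : ∀ x ∈ X, N x ∈ X)
    {n : ℝ} (hn : 0 ≤ n) {x₀ : E} (hx₀ : x₀ ∈ X) {T : ℝ} (hT : 0 ≤ T) :
    ∃ y : ℝ → E, y 0 = x₀ ∧ (∀ t ∈ Set.Icc 0 T, y t ∈ X) ∧
      ∀ t ∈ Set.Icc 0 T, HasDerivWithinAt y (n • (N (y t) - y t)) (Set.Icc 0 T) t := by
  have hM : LipschitzWith (KN * KP) (fun x => N (P x)) := by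
    intro x y
    refine (hN (hPX x) (hPX y)).trans ?_
    rw [ENNReal.coe_mul, mul_assoc]
    gcongr
    exact hP x y
  have hρ : 0 ≤ ρ := (norm_nonneg _).trans (hXb _ hx₀)
  let F : ℝ → E → E := fun t z => (n * exp (n * t)) • N (P (exp (-(n * t)) • z))
  have hPL : IsPicardLindelof F (⟨0, Set.left_mem_Icc.2 hT⟩ : Set.Icc (0 : ℝ) T) x₀
      ((n * exp (n * T) * ρ).toNNReal * T.toNNReal) 0 (n * exp (n * T) * ρ).toNNReal
      ((n * exp (n * T)).toNNReal * (KN * KP)) := by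
    refine ⟨fun t ht => ?_, fun x _ => ?_, fun t ht x _ => ?_, ?_⟩
    · refine LipschitzOnWith.of_dist_le_mul fun x _ y _ => ?_
      have h1 := hM.dist_le_mul (exp (-(n * t)) • x) (exp (-(n * t)) • y)
      have h2 : dist (exp (-(n * t)) • x) (exp (-(n * t)) • y) ≤ dist x y := by
        rw [dist_smul₀, norm_of_nonneg (exp_pos _).le]
        have : exp (-(n * t)) ≤ 1 := exp_le_one_iff.2 (by have := mul_nonneg hn ht.1; linarith)
        nlinarith [dist_nonneg (x := x) (y := y)]
      have h3 : exp (n * t) ≤ exp (n * T) := exp_le_exp.2 (mul_le_mul_of_nonneg_left ht.2 hn)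
      rw [dist_smul₀, norm_of_nonneg (by positivity), NNReal.coe_mul,
        Real.coe_toNNReal _ (by positivity), mul_assoc _ ((KN * KP : NNReal) : ℝ)]
      calc n * exp (n * t) * dist (N (P (exp (-(n * t)) • x))) (N (P (exp (-(n * t)) • y)))
          ≤ n * exp (n * T) * (((KN * KP : NNReal) : ℝ) *
            dist (exp (-(n * t)) • x) (exp (-(n * t)) • y)) := by gcongr
        _ ≤ _ := by gcongr
    · have : Continuous (F · x) := by
        have hc : Continuous fun t : ℝ => N (P (exp (-(n * t)) • x)) :=
          hM.continuous.comp (by fun_prop : Continuous fun t : ℝ => exp (-(n * t)) • x)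
        have hd : Continuous fun t : ℝ => n * exp (n * t) := by fun_prop
        exact hd.smul hc
      exact this.continuousOn
    · have h3 : exp (n * t) ≤ exp (n * T) := exp_le_exp.2 (mul_le_mul_of_nonneg_left ht.2 hn)
      rw [Real.coe_toNNReal _ (by positivity)]
      simp only [F]
      rw [norm_smul, norm_of_nonneg (by positivity)]
      gcongr
      exact hXb _ (hNX _ (hPX _))
    · simp [hT]
  obtain ⟨z, hz0, hz⟩ := hPL.exists_eq_forall_mem_Icc_hasDerivWithinAt₀
  simp only at hz0
  have hzc : ContinuousOn z (Set.Icc 0 T) := fun t ht => (hz t ht).continuousWithinAt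
  -- A functional bounded by `c` on `X` stays bounded by `c` along `exp (-n t) z`, because
  -- `ℓ z - c exp (n t)` is nonincreasing; Hahn-Banach then keeps the curve in `X`.
  have hmem : ∀ t ∈ Set.Icc 0 T, exp (-(n * t)) • z t ∈ X := by
    intro t ht
    by_contra hcon
    obtain ⟨ℓ, c, hℓ, hc⟩ := geometric_hahn_banach_closed_point hXconv hXc hcon
    have hanti : AntitoneOn (fun s => ℓ (z s) - c * exp (n * s)) (Set.Icc 0 T) := by
      have hd : ∀ s ∈ Set.Icc 0 T, HasDerivWithinAt (fun s => ℓ (z s) - c * exp (n * s))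
          (n * exp (n * s) * (ℓ (N (P (exp (-(n * s)) • z s))) - c)) (Set.Icc 0 T) s := by
        intro s hs
        have h1 := ℓ.hasFDerivAt.comp_hasDerivWithinAt s (hz s hs)
        have h2 : HasDerivAt (fun s => c * exp (n * s)) (c * (exp (n * s) * (n * 1))) s :=
          (((hasDerivAt_id s).const_mul n).exp).const_mul c
        refine HasDerivWithinAt.congr_deriv (h1.sub h2.hasDerivWithinAt) ?_
        simp only [F, map_smul, smul_eq_mul]
        ring
      refine antitoneOn_of_deriv_nonpos (convex_Icc 0 T)
        (fun s hs => (hd s hs).continuousWithinAt) (fun s hs => ?_) (fun s hs => ?_)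
      · exact ((hd s (interior_subset hs)).mono interior_subset).differentiableWithinAt
      · rw [interior_Icc] at hs
        rw [((hd s (Set.Ioo_subset_Icc_self hs)).hasDerivAt (Icc_mem_nhds hs.1 hs.2)).deriv]
        refine mul_nonpos_of_nonneg_of_nonpos (by positivity) ?_
        linarith [hℓ _ (hNX _ (hPX (exp (-(n * s)) • z s)))]
    have h := hanti (Set.left_mem_Icc.2 hT) ht ht.1
    simp only [hz0, mul_zero, exp_zero] at h
    have h1 := hℓ _ hx₀
    rw [map_smul, smul_eq_mul, exp_neg, inv_mul_eq_div, lt_div_iff₀ (exp_pos _)] at hc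
    linarith
  refine ⟨fun t => exp (-(n * t)) • z t, by simp [hz0], hmem, fun t ht => ?_⟩
  have h1 : HasDerivAt (fun t => exp (-(n * t))) (exp (-(n * t)) * (-(n * 1))) t :=
    (((hasDerivAt_id t).const_mul n).neg).exp
  have h2 := h1.hasDerivWithinAt.smul (hz t ht)
  refine HasDerivWithinAt.congr_deriv h2 (Eq.symm ?_)
  simp only [F]
  rw [hPid _ (hmem t ht), smul_smul, smul_sub, smul_smul, sub_eq_add_neg, ← neg_smul]
  have : exp (-(n * t)) * (n * exp (n * t)) = n := by
    rw [mul_left_comm, ← exp_add]; simp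
  rw [this]
  congr 2
  ring

/-- Global version of `ode_exists_Icc`, glued from the intervals `[0, k]` by uniqueness. -/
lemma ode_exists {E : Type*} [NormedAddCommGroup E] [NormedSpace ℝ E] [CompleteSpace E]
    {X : Set E} (hXc : IsClosed X) (hXconv : Convex ℝ X) {ρ : ℝ} (hXb : ∀ x ∈ X, ‖x‖ ≤ ρ)
    {P : E → E} {KP : NNReal} (hP : LipschitzWith KP P) (hPX : ∀ x, P x ∈ X)
    (hPid : ∀ x ∈ X, P x = x)
    {N : E → E} {KN : NNReal} (hN : LipschitzOnWith KN N X) (hNX : ∀ x ∈ X, N x ∈ X)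
    {n : ℝ} (hn : 0 ≤ n) {x₀ : E} (hx₀ : x₀ ∈ X) :
    ∃ y : ℝ → E, y 0 = x₀ ∧ (∀ t, 0 ≤ t → y t ∈ X) ∧
      ∀ t, 0 ≤ t → HasDerivWithinAt y (n • (N (y t) - y t)) (Set.Ici 0) t := by
  have hv : ∃ K : NNReal, LipschitzOnWith K (fun x => n • (N x - x)) X :=
    ⟨_, (lipschitzWith_smul n).comp_lipschitzOnWith (hN.sub LipschitzWith.id.lipschitzOnWith)⟩
  obtain ⟨K, hv⟩ := hv
  choose Y hY0 hYX hYd using fun k : ℕ =>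
    ode_exists_Icc hXc hXconv hXb hP hPX hPid hN hNX hn hx₀ (Nat.cast_nonneg (α := ℝ) k)
  have hright : ∀ (k : ℕ) (t : ℝ), t ∈ Set.Ico (0 : ℝ) k →
      HasDerivWithinAt (Y k) (n • (N (Y k t) - Y k t)) (Set.Ici t) t := fun k t ht =>
    (hYd k t ⟨ht.1, ht.2.le⟩).mono_of_mem_nhdsWithin
      (Filter.mem_of_superset (Icc_mem_nhdsGE ht.2) (Set.Icc_subset_Icc_left ht.1))
  have hagree : ∀ k l : ℕ, k ≤ l → Set.EqOn (Y k) (Y l) (Set.Icc 0 (k : ℝ)) := by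
    intro k l hkl
    have hkl' : (k : ℝ) ≤ l := by exact_mod_cast hkl
    refine ode_unique hv (fun t ht => (hYd k t ht).continuousWithinAt)
      (fun t ht => ((hYd l t ⟨ht.1, ht.2.trans hkl'⟩).continuousWithinAt).mono
        (Set.Icc_subset_Icc_right hkl')) (hright k)
      (fun t ht => hright l t ⟨ht.1, ht.2.trans_le hkl'⟩)
      (fun t ht => hYX k t ⟨ht.1, ht.2.le⟩) (fun t ht => hYX l t ⟨ht.1, ht.2.le.trans hkl'⟩)
      (by rw [hY0, hY0])
  have heq : ∀ (k : ℕ) (t : ℝ), t ∈ Set.Icc (0 : ℝ) k → Y ⌈t⌉₊ t = Y k t := fun k t ht =>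
    hagree _ _ (Nat.ceil_le.2 ht.2) ⟨ht.1, Nat.le_ceil t⟩
  refine ⟨fun t => Y ⌈t⌉₊ t, by simp [hY0], fun t ht => hYX _ _ ⟨ht, Nat.le_ceil t⟩,
    fun t ht => ?_⟩
  obtain ⟨k, hk⟩ := exists_nat_gt t
  have h := hYd k t ⟨ht, hk.le⟩
  have h' : HasDerivWithinAt (fun t => Y ⌈t⌉₊ t)
      (n • (N (Y ⌈t⌉₊ t) - Y ⌈t⌉₊ t)) (Set.Icc 0 (k : ℝ)) t := by
    rw [heq k t ⟨ht, hk.le⟩]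
    exact h.congr (fun s hs => heq k s hs) (heq k t ⟨ht, hk.le⟩)
  refine h'.mono_of_mem_nhdsWithin ?_
  rw [← Set.Ici_inter_Iic]
  exact Filter.inter_mem self_mem_nhdsWithin (mem_nhdsWithin_of_mem_nhds (Iic_mem_nhds hk))

/-- The radial retraction onto the ball of radius `ρ`. It is constantly zero for `ρ = 0`. -/
noncomputable def radial {E : Type*} [NormedAddCommGroup E] [NormedSpace ℝ E] (ρ : ℝ) (u : E) :
    E := (ρ / max ρ ‖u‖) • u

lemma radial_lipschitz {E : Type*} [NormedAddCommGroup E] [NormedSpace ℝ E] {ρ : ℝ}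
    (hρ : 0 ≤ ρ) : LipschitzWith 2 (radial ρ : E → E) := by
  refine LipschitzWith.of_dist_le_mul fun u v => ?_
  rcases hρ.eq_or_lt with rfl | hρ
  · simp only [radial, zero_div, zero_smul, dist_self]
    positivity
  rw [dist_eq_norm, dist_eq_norm]
  have hu : 0 < max ρ ‖u‖ := lt_max_of_lt_left hρ
  have hv : 0 < max ρ ‖v‖ := lt_max_of_lt_left hρ
  have hsplit : radial ρ u - radial ρ v
      = (ρ / max ρ ‖u‖) • (u - v) + (ρ / max ρ ‖u‖ - ρ / max ρ ‖v‖) • v := by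
    simp only [radial, smul_sub, sub_smul]; abel
  have hc : ρ / max ρ ‖u‖ ≤ 1 := (div_le_one hu).2 (le_max_left _ _)
  have hc0 : 0 ≤ ρ / max ρ ‖u‖ := by positivity
  have hdiff : |ρ / max ρ ‖u‖ - ρ / max ρ ‖v‖| * ‖v‖ ≤ ‖u - v‖ := by
    have h1 : ρ / max ρ ‖u‖ - ρ / max ρ ‖v‖
        = (ρ / max ρ ‖u‖) * ((max ρ ‖v‖ - max ρ ‖u‖) / max ρ ‖v‖) := by
      field_simp
    have h2 : |max ρ ‖v‖ - max ρ ‖u‖| ≤ ‖u - v‖ := by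
      rw [max_comm ρ, max_comm ρ]
      refine (abs_max_sub_max_le_abs ‖v‖ ‖u‖ ρ).trans ?_
      rw [norm_sub_rev]
      exact abs_norm_sub_norm_le v u
    rw [h1, abs_mul, abs_of_nonneg hc0, abs_div, abs_of_pos hv, mul_assoc,
      div_mul_eq_mul_div |max ρ ‖v‖ - max ρ ‖u‖|]
    have h3 : |max ρ ‖v‖ - max ρ ‖u‖| * ‖v‖ / max ρ ‖v‖ ≤ ‖u - v‖ := by
      rw [div_le_iff₀ hv]
      exact mul_le_mul h2 (le_max_right _ _) (norm_nonneg _) (norm_nonneg _)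
    calc _ ≤ 1 * ‖u - v‖ := by
          refine mul_le_mul hc h3 (by positivity) zero_le_one
      _ = _ := one_mul _
  rw [hsplit]
  refine (norm_add_le _ _).trans ?_
  rw [norm_smul, norm_smul, Real.norm_eq_abs, Real.norm_eq_abs, abs_of_nonneg hc0]
  have : ρ / max ρ ‖u‖ * ‖u - v‖ ≤ 1 * ‖u - v‖ := by gcongr
  push_cast
  linarith

lemma norm_radial_le {E : Type*} [NormedAddCommGroup E] [NormedSpace ℝ E] {ρ : ℝ}
    (hρ : 0 ≤ ρ) (u : E) : ‖radial ρ u‖ ≤ ρ := by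
  have h0 : 0 ≤ max ρ ‖u‖ := le_max_of_le_left hρ
  rw [radial, norm_smul, norm_of_nonneg (by positivity), div_mul_eq_mul_div]
  exact div_le_of_le_mul₀ h0 hρ (mul_le_mul_of_nonneg_left (le_max_right _ _) hρ)

lemma radial_of_norm_le {E : Type*} [NormedAddCommGroup E] [NormedSpace ℝ E] {ρ : ℝ}
    {u : E} (hu : ‖u‖ ≤ ρ) : radial ρ u = u := by
  rw [radial, max_eq_left hu]
  rcases ((norm_nonneg u).trans hu).eq_or_lt with h | h
  · have : u = 0 := norm_le_zero_iff.1 (hu.trans h.symm.le)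
    simp [this]
  · rw [div_self h.ne', one_smul]

/-! ### The set of nonnegative densities of bounded mass -/

lemma L1_smul_nonneg {c : ℝ} (hc : 0 ≤ c) {u : L1} (hu : 0 ≤ u) : 0 ≤ c • u := by
  rw [← Lp.coeFn_nonneg] at hu ⊢
  filter_upwards [hu, Lp.coeFn_smul c u] with p hp hs
  rw [hs]
  exact mul_nonneg hc hp

lemma memX_iff {r : ℝ} {u : L1} : memX r u ↔ 0 ≤ u ∧ ‖u‖ ≤ r := by
  rw [memX, Lp.coeFn_nonneg]

lemma isClosed_memX (r : ℝ) : IsClosed {u : L1 | memX r u} := by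
  simp only [memX_iff]
  exact (isClosed_Ici (a := (0 : L1))).inter (isClosed_le continuous_norm continuous_const)

lemma convex_memX (r : ℝ) : Convex ℝ {u : L1 | memX r u} := by
  intro u hu v hv a b ha hb hab
  simp only [memX_iff, Set.mem_ofPred_eq] at hu hv ⊢
  refine ⟨add_nonneg (L1_smul_nonneg ha hu.1) (L1_smul_nonneg hb hv.1), ?_⟩
  refine (norm_add_le _ _).trans ?_
  rw [norm_smul, norm_smul, norm_of_nonneg ha, norm_of_nonneg hb]
  calc a * ‖u‖ + b * ‖v‖ ≤ a * r + b * r := by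
        gcongr
        · exact hu.2
        · exact hv.2
    _ = r := by rw [← add_mul, hab, one_mul]

/-- `X_ρ` is a Lipschitz retract of `L¹`: take the positive part, then retract radially. -/
lemma exists_retraction {ρ : ℝ} (hρ : 0 ≤ ρ) : ∃ (P : L1 → L1) (K : NNReal), LipschitzWith K P ∧
    (∀ u, memX ρ (P u)) ∧ ∀ u, memX ρ u → P u = u := by
  refine ⟨fun u => radial ρ (u⁺), _, (radial_lipschitz hρ).comp lipschitzWith_posPart,
    fun u => ?_, fun u hu => ?_⟩
  · rw [memX_iff]
    refine ⟨L1_smul_nonneg ?_ (posPart_nonneg u), norm_radial_le hρ _⟩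
    exact div_nonneg hρ (le_max_of_le_left hρ)
  · rw [memX_iff] at hu
    simp only [posPart_of_nonneg hu.1]
    exact radial_of_norm_le hu.2

theorem statement_14
    (C₀ C₁ α β : ℝ) (hC₀ : 0 < C₀) (hC₁ : 0 < C₁) (hα : C₀ ≤ α) (hβ : C₀ ≤ β)
    (S₀ : E3 → E3 → E3 → E3 → ℝ)
    (hS₀meas : Measurable fun x : (E3 × E3) × E3 × E3 => S₀ x.1.1 x.1.2 x.2.1 x.2.2)
    (hS₀nonneg : ∀ p q p' q', 0 ≤ S₀ p q p' q')
    (hS₀bdd : ∀ p q p' q', S₀ p q p' q' ≤ C₁)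
    (hS₀symm : ∀ p q p' q', S₀ p q p' q' = S₀ p' q' p q)
    (r : ℝ) (hr : 0 < r) (n : ℕ)
    (hn4 : 4 ≤ n) (hn1 : (1 + 4 * Real.pi * C₁ * α * β ^ 2 * r) / Real.sqrt n ≤ 1)
    (hn2 : 3 * (4 * Real.pi * C₁ * α * β ^ 2) * r * (1 + 4 * Real.pi * C₁ * α * β ^ 2 * r) / Real.sqrt n ≤ 1 / 2)
    (Rn : L1 → L1)
    (hRn : ∀ u : L1, memX r u → memX r (Rn u) ∧
      (fun p : E3 =>
          Real.sqrt n * (Rn u) p - (pZ α β p)⁻¹ * Qcoll α β S₀ (⇑(Rn u)) (⇑(Rn u)) p)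
        =ᵐ[volume] ⇑u)
    (g₀ : L1) (hg₀ : memX r g₀) (t₀ : ℝ) (ht₀ : 0 ≤ t₀) :
    ∃ f : ℝ → L1,
      (ContinuousOn f (Set.Ici t₀) ∧ (∀ t : ℝ, t₀ ≤ t → memX r (f t)) ∧
        ∀ t : ℝ, 0 ≤ t → f (t₀ + t) = g₀ +
          ∫ s in (0:ℝ)..t, (((n : ℝ) * Real.sqrt n) • Rn (f (t₀ + s)) - (n : ℝ) • f (t₀ + s))) ∧
      (∀ t : ℝ, t₀ ≤ t → ‖f t‖ ≤ ‖g₀‖) ∧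
      ∀ f' : ℝ → L1,
        (ContinuousOn f' (Set.Ici t₀) ∧ (∀ t : ℝ, t₀ ≤ t → memX r (f' t)) ∧
        ∀ t : ℝ, 0 ≤ t → f' (t₀ + t) = g₀ +
          ∫ s in (0:ℝ)..t, (((n : ℝ) * Real.sqrt n) • Rn (f' (t₀ + s)) - (n : ℝ) • f' (t₀ + s))) →
        ∀ t : ℝ, t₀ ≤ t → f' t = f t := by
  have hα0 : 0 < α := hC₀.trans_le hα
  have hβ0 : 0 < β := hC₀.trans_le hβ
  have hs2 : 2 ≤ Real.sqrt n := by
    rw [Real.le_sqrt' (by norm_num)]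
    have : (4 : ℝ) ≤ n := by exact_mod_cast hn4
    linarith
  have hs0 : 0 < Real.sqrt n := by linarith
  -- Condition (⋆) makes the Lipschitz constant `4 C r` of the collision term on `X_r` at most
  -- `(2/3) √n`.
  have hCr : 6 * (4 * Real.pi * C₁ * α * β ^ 2 * r) ≤ Real.sqrt n := by
    rw [div_le_iff₀ hs0] at hn2
    have : 0 ≤ 4 * Real.pi * C₁ * α * β ^ 2 * r := by positivity
    nlinarith
  have hRlip : ∀ u v : L1, memX r u → memX r v → ‖Rn u - Rn v‖ ≤ 3 / 2 * ‖u - v‖ := by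
    intro u v hu hv
    have h := resolvent_lip hα0 hβ0 hS₀meas hS₀nonneg hS₀bdd hC₁.le hS₀symm hs0.le
      (hRn u hu).2 (hRn v hv).2
    have h1 := (hRn u hu).1.2
    have h2 := (hRn v hv).1.2
    have h3 : 2 * (4 * Real.pi * C₁ * α * β ^ 2) * (‖Rn u‖ + ‖Rn v‖) * ‖Rn u - Rn v‖
        ≤ 2 * (4 * Real.pi * C₁ * α * β ^ 2) * (r + r) * ‖Rn u - Rn v‖ := by gcongr
    have h4 : 2 * (4 * Real.pi * C₁ * α * β ^ 2) * (r + r) * ‖Rn u - Rn v‖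
        ≤ 2 / 3 * Real.sqrt n * ‖Rn u - Rn v‖ := by
      refine mul_le_mul_of_nonneg_right ?_ (norm_nonneg _)
      linarith
    have h5 : 2 * ‖Rn u - Rn v‖ ≤ Real.sqrt n * ‖Rn u - Rn v‖ := by gcongr
    linarith
  have hRmass : ∀ u : L1, memX r u → Real.sqrt n * ‖Rn u‖ = ‖u‖ := fun u hu =>
    resolvent_mass hα0 hβ0 hS₀meas hS₀nonneg hS₀bdd hS₀symm (hRn u hu).2 (hRn u hu).1.1 hu.1
  have hRL : LipschitzOnWith (3 / 2) Rn {u | memX r u} :=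
    LipschitzOnWith.of_dist_le_mul fun u hu v hv => by
      simpa [dist_eq_norm] using hRlip u v hu hv
  let v : L1 → L1 := fun u => ((n : ℝ) * Real.sqrt n) • Rn u - (n : ℝ) • u
  have hvL : ∃ K : NNReal, LipschitzOnWith K v {u | memX r u} :=
    ⟨_, ((lipschitzWith_smul ((n : ℝ) * Real.sqrt n)).comp_lipschitzOnWith hRL).sub
      (lipschitzWith_smul (n : ℝ)).lipschitzOnWith⟩
  obtain ⟨K, hvL⟩ := hvL
  -- Solving in `X_ρ` with `ρ = ‖g₀‖` rather than in `X_r` yields the norm bound at once.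
  have hsub : ∀ u : L1, memX ‖g₀‖ u → memX r u := fun u hu => ⟨hu.1, hu.2.trans hg₀.2⟩
  obtain ⟨P, KP, hP, hPX, hPid⟩ := exists_retraction (norm_nonneg g₀)
  have hNL : LipschitzOnWith _ (fun u => Real.sqrt n • Rn u) {u | memX ‖g₀‖ u} :=
    (lipschitzWith_smul (Real.sqrt n)).comp_lipschitzOnWith (hRL.mono hsub)
  obtain ⟨y, hy0, hyX, hyd⟩ := ode_exists (isClosed_memX ‖g₀‖) (convex_memX ‖g₀‖)
    (fun u hu => hu.2) hP hPX hPid hNL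
    (fun u hu => by
      have h := (hRn u (hsub u hu)).1
      rw [Set.mem_ofPred_eq, memX_iff]
      rw [memX_iff] at h
      refine ⟨L1_smul_nonneg hs0.le h.1, ?_⟩
      rw [norm_smul, norm_of_nonneg hs0.le, hRmass u (hsub u hu)]
      exact hu.2)
    (Nat.cast_nonneg (α := ℝ) n) (x₀ := g₀) ⟨hg₀.1, le_rfl⟩
  have hyv : ∀ t, 0 ≤ t → HasDerivWithinAt y (v (y t)) (Set.Ici 0) t := fun t ht =>
    (hyd t ht).congr_deriv (by simp only [v, smul_sub, smul_smul])
  have hyc : ContinuousOn y (Set.Ici 0) := fun t ht => (hyv t ht).continuousWithinAt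
  have hvc : ∀ w : ℝ → L1, ContinuousOn w (Set.Ici 0) → (∀ t, 0 ≤ t → memX r (w t)) →
      ContinuousOn (fun s => v (w s)) (Set.Ici 0) := fun w hw hwX =>
    hvL.continuousOn.comp hw fun t ht => hwX t ht
  refine ⟨fun t => y (t - t₀), ⟨?_, fun t ht => hsub _ (hyX _ (sub_nonneg.2 ht)), fun t ht => ?_⟩,
    fun t ht => (hyX _ (sub_nonneg.2 ht)).2, ?_⟩
  · exact hyc.comp (by fun_prop) fun t ht => Set.mem_Ici.2 (sub_nonneg.2 ht)
  · have h := intervalIntegral.integral_eq_sub_of_hasDeriv_right_of_le ht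
      (hyc.mono Set.Icc_subset_Ici_self)
      (fun s hs => (hyv s hs.1.le).mono (Set.Ioi_subset_Ici hs.1.le))
      (((hvc y hyc fun s hs => hsub _ (hyX s hs)).mono
        Set.Icc_subset_Ici_self).intervalIntegrable_of_Icc ht)
    simp only [add_sub_cancel_left]
    rw [show (∫ s in (0 : ℝ)..t, (((n : ℝ) * Real.sqrt n) • Rn (y s) - (n : ℝ) • y s))
      = y t - y 0 from h, hy0]
    abel
  · rintro f' ⟨hfc, hfX, hfe⟩ t ht
    set w : ℝ → L1 := fun s => f' (t₀ + s) with hw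
    have hwX : ∀ s, 0 ≤ s → memX r (w s) := fun s hs => hfX _ (by linarith)
    have hwc : ContinuousOn w (Set.Ici 0) :=
      hfc.comp (by fun_prop) fun s (hs : 0 ≤ s) => by
        simp only [Set.mem_Ici]; linarith
    have hvw := hvc w hwc hwX
    have hwe : ∀ s, 0 ≤ s → w s = g₀ + ∫ x in (0 : ℝ)..s, v (w x) := hfe
    have hwd : ∀ s, 0 ≤ s → HasDerivWithinAt w (v (w s)) (Set.Ici s) s := by
      intro s hs
      have h1 : HasDerivWithinAt (fun x => ∫ a in (0 : ℝ)..x, v (w a)) (v (w s)) (Set.Ici s) s :=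
        intervalIntegral.integral_hasDerivWithinAt_right
          ((hvw.mono Set.Icc_subset_Ici_self).intervalIntegrable_of_Icc hs)
          (hvw.stronglyMeasurableAtFilter_nhdsWithin measurableSet_Ici s |>.filter_mono
            (nhdsWithin_mono _ (Set.Ioi_subset_Ici hs)))
          ((hvw s hs).mono ((Set.Ioi_subset_Ici hs)))
      exact (h1.const_add g₀).congr (fun x hx => hwe x (hs.trans hx)) (hwe s hs)
    have h := ode_unique (T := t - t₀) hvL (hwc.mono Set.Icc_subset_Ici_self)
      (hyc.mono Set.Icc_subset_Ici_self) (fun s hs => hwd s hs.1)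
      (fun s hs => (hyv s hs.1).mono (Set.Ici_subset_Ici.2 hs.1)) (fun s hs => hwX s hs.1)
      (fun s hs => hsub _ (hyX s hs.1)) (by rw [hwe 0 le_rfl, hy0]; simp)
      (Set.right_mem_Icc.2 (sub_nonneg.2 ht))
    simpa [hw] using h
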